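/- There exists a constant C > 0, depending only on n, κ1 and C₀, such that for every x = (x', x_n) ∈ Ω₁ the Laplacian of ũ satisfies |Δũ(x)| ≤ C·|φ(x') − ψ(x')|/(ε + |x'|²) + C·(|x'|/(ε + |x'|²) + 1)·(‖∇φ‖_∞ + ‖∇ψ‖_∞) + C·(‖∇²φ‖_∞ + ‖∇²ψ‖_∞). -/

import Mathlib

open MeasureTheory Metric Finset

noncomputable section

/-- `ℝ^{n-1}`, the horizontal (tangential) variables `x'`. -/
abbrev Ep (n : ℕ) := EuclideanSpace ℝ (Fin (n - 1))

/-- `ℝ^n = ℝ^{n-1} × ℝ`, points written `x = (x', x_n)`. -/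
abbrev Efull (n : ℕ) := Ep n × ℝ

/-- The narrow region `Ω_r`. -/
def Omega (n : ℕ) (ε : ℝ) (h1 h2 : Ep n → ℝ) (r : ℝ) : Set (Efull n) :=
  {x | ‖x.1‖ < r ∧ -ε/2 + h2 x.1 < x.2 ∧ x.2 < ε/2 + h1 x.1}

/-- Top boundary `Γ_r⁺`. -/
def Gammap (n : ℕ) (ε : ℝ) (h1 : Ep n → ℝ) (r : ℝ) : Set (Efull n) :=
  {x | ‖x.1‖ ≤ r ∧ x.2 = ε/2 + h1 x.1}

/-- Bottom boundary `Γ_r⁻`. -/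
def Gammam (n : ℕ) (ε : ℝ) (h2 : Ep n → ℝ) (r : ℝ) : Set (Efull n) :=
  {x | ‖x.1‖ ≤ r ∧ x.2 = -ε/2 + h2 x.1}

/-- `Ω̂_s(x₀) = {x ∈ Ω_{1/2} : |x' - x₀'| < s}`. -/
def OmegaHat (n : ℕ) (ε : ℝ) (h1 h2 : Ep n → ℝ) (x0 : Efull n) (s : ℝ) : Set (Efull n) :=
  {x | x ∈ Omega n ε h1 h2 (1/2) ∧ ‖x.1 - x0.1‖ < s}

/-- The `n` coordinate directions of `ℝ^{n-1} × ℝ`: the first `n-1` are the horizontal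
Euclidean basis vectors, the last is the vertical direction. -/
def dir (n : ℕ) (α : Fin n) : Efull n :=
  if h : (α : ℕ) < n - 1 then (EuclideanSpace.single (⟨(α : ℕ), h⟩ : Fin (n - 1)) 1, (0:ℝ))
  else (0, 1)

/-- Tangential direction `e_α` for `α ∈ {1, …, n-1}`. -/
def tang (n : ℕ) (α : Fin (n - 1)) : Efull n := (EuclideanSpace.single α 1, (0:ℝ))

/-- Vertical direction `e_n`. -/
def vert (n : ℕ) : Efull n := (0, 1)

/-- Pointwise Laplacian `Δu = Σ_α ∂_α∂_α u`. -/
def lapl (n : ℕ) (u : Efull n → ℝ) (x : Efull n) : ℝ :=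
  ∑ α : Fin n, fderiv ℝ (fun y => fderiv ℝ u y (dir n α)) x (dir n α)

/-- The auxiliary function `ū(x', x_n) = (x_n - h2(x') + ε/2)/(ε + h1(x') - h2(x'))`. -/
def ubar (n : ℕ) (ε : ℝ) (h1 h2 : Ep n → ℝ) (x : Efull n) : ℝ :=
  (x.2 - h2 x.1 + ε/2) / (ε + h1 x.1 - h2 x.1)

/-- The auxiliary function `ũ = φ(x')·ū + ψ(x')·(1 - ū)`. -/
def util (n : ℕ) (ε : ℝ) (h1 h2 φ ψ : Ep n → ℝ) (x : Efull n) : ℝ :=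
  φ x.1 * ubar n ε h1 h2 x + ψ x.1 * (1 - ubar n ε h1 h2 x)

/-- `C²`-norm on the closed unit ball: `sup_{|x'| ≤ 1} (|f| + |∇f| + |∇²f|)`. -/
def C2norm {F : Type*} [NormedAddCommGroup F] [NormedSpace ℝ F] (n : ℕ)
    (f : Ep n → F) : ℝ :=
  ⨆ y : closedBall (0 : Ep n) 1,
    (‖f (y : Ep n)‖ + ‖fderiv ℝ f (y : Ep n)‖ + ‖fderiv ℝ (fderiv ℝ f) (y : Ep n)‖)

/-- `C²(S)`-norm of a function on `ℝ^n`. -/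
def C2normOn (n : ℕ) (S : Set (Efull n)) (f : Efull n → ℝ) : ℝ :=
  ⨆ y : S,
    (‖f (y : Efull n)‖ + ‖fderiv ℝ f (y : Efull n)‖ + ‖fderiv ℝ (fderiv ℝ f) (y : Efull n)‖)

/-- `‖∇f‖_∞ = sup_{|x'| ≤ 1} |∇f(x')|`. -/
def gradSup {F : Type*} [NormedAddCommGroup F] [NormedSpace ℝ F] (n : ℕ) (f : Ep n → F) : ℝ :=
  ⨆ y : closedBall (0 : Ep n) 1, ‖fderiv ℝ f (y : Ep n)‖

/-- `‖∇²f‖_∞ = sup_{|x'| ≤ 1} |∇²f(x')|`. -/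
def hessSup {F : Type*} [NormedAddCommGroup F] [NormedSpace ℝ F] (n : ℕ) (f : Ep n → F) : ℝ :=
  ⨆ y : closedBall (0 : Ep n) 1, ‖fderiv ℝ (fderiv ℝ f) (y : Ep n)‖

/-- The geometric hypotheses on `h1, h2`: `C²` on the closed unit ball, the two graphs
do not touch, flatness at the origin, strict convexity of the gap, and `C²`-bound `κ1`. -/
def HGeom (n : ℕ) (ε κ0 κ1 : ℝ) (h1 h2 : Ep n → ℝ) : Prop :=
  ContDiffOn ℝ 2 h1 (closedBall 0 1) ∧ ContDiffOn ℝ 2 h2 (closedBall 0 1) ∧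
  (∀ y : Ep n, ‖y‖ ≤ 1 → -ε/2 + h2 y < ε/2 + h1 y) ∧
  h1 0 = 0 ∧ h2 0 = 0 ∧ fderiv ℝ h1 0 = 0 ∧ fderiv ℝ h2 0 = 0 ∧
  (∀ v : Ep n, κ0 * ‖v‖^2 ≤ fderiv ℝ (fderiv ℝ (fun y => h1 y - h2 y)) 0 v v) ∧
  C2norm n h1 + C2norm n h2 ≤ κ1

/-- Comparability `(ε + |x'|²)/C₀ ≤ δ(x') ≤ C₀ (ε + |x'|²)`. -/
def DeltaComp (n : ℕ) (ε C₀ : ℝ) (h1 h2 : Ep n → ℝ) : Prop :=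
  ∀ y : Ep n, ‖y‖ ≤ 1 →
    (ε + ‖y‖^2) / C₀ ≤ ε + h1 y - h2 y ∧ ε + h1 y - h2 y ≤ C₀ * (ε + ‖y‖^2)

/-- Hypotheses on the coefficients: `C²`-regularity with total `C²(Ω₁)`-norm at most `κ2`,
boundedness `|A| ≤ Λ`, and the weak ellipticity (Legendre) condition with constant `λ`. -/
def CoeffHyp (n N : ℕ) (ε lam Lam κ2 : ℝ) (h1 h2 : Ep n → ℝ)
    (A : Fin n → Fin n → Fin N → Fin N → Efull n → ℝ)
    (B : Fin n → Fin N → Fin N → Efull n → ℝ)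
    (Cc : Fin n → Fin N → Fin N → Efull n → ℝ)
    (Dc : Fin N → Fin N → Efull n → ℝ) : Prop :=
  (∀ α β i j, ContDiffOn ℝ 2 (A α β i j) (Omega n ε h1 h2 1)) ∧
  (∀ α i j, ContDiffOn ℝ 2 (B α i j) (Omega n ε h1 h2 1)) ∧
  (∀ β i j, ContDiffOn ℝ 2 (Cc β i j) (Omega n ε h1 h2 1)) ∧
  (∀ i j, ContDiffOn ℝ 2 (Dc i j) (Omega n ε h1 h2 1)) ∧
  ((∑ α : Fin n, ∑ β : Fin n, ∑ i : Fin N, ∑ j : Fin N,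
      C2normOn n (Omega n ε h1 h2 1) (A α β i j)) +
   (∑ α : Fin n, ∑ i : Fin N, ∑ j : Fin N, C2normOn n (Omega n ε h1 h2 1) (B α i j)) +
   (∑ β : Fin n, ∑ i : Fin N, ∑ j : Fin N, C2normOn n (Omega n ε h1 h2 1) (Cc β i j)) +
   (∑ i : Fin N, ∑ j : Fin N, C2normOn n (Omega n ε h1 h2 1) (Dc i j)) ≤ κ2) ∧
  (∀ α β i j, ∀ x ∈ Omega n ε h1 h2 1, |A α β i j x| ≤ Lam) ∧
  (∀ ξ : Efull n → EuclideanSpace ℝ (Fin N), ContDiff ℝ (⊤ : ℕ∞) ξ →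
    HasCompactSupport ξ → tsupport ξ ⊆ Omega n ε h1 h2 1 →
    lam * ∫ x in Omega n ε h1 h2 1, ‖fderiv ℝ ξ x‖^2 ≤
      ∫ x in Omega n ε h1 h2 1,
        ∑ α : Fin n, ∑ β : Fin n, ∑ i : Fin N, ∑ j : Fin N,
          A α β i j x * fderiv ℝ ξ x (dir n α) i * fderiv ℝ ξ x (dir n β) j)

/-- `u` is a weak solution of
`∂_α(A^{αβ}_{ij} ∂_β u^j + B^α_{ij} u^j) + C^β_{ij} ∂_β u^j + D_{ij} u^j = 0` in `Ω₁`. -/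
def WeakSol (n N : ℕ) (ε : ℝ) (h1 h2 : Ep n → ℝ)
    (A : Fin n → Fin n → Fin N → Fin N → Efull n → ℝ)
    (B : Fin n → Fin N → Fin N → Efull n → ℝ)
    (Cc : Fin n → Fin N → Fin N → Efull n → ℝ)
    (Dc : Fin N → Fin N → Efull n → ℝ)
    (u : Efull n → EuclideanSpace ℝ (Fin N)) : Prop :=
  ContDiffOn ℝ 1 u (Omega n ε h1 h2 1) ∧
  IntegrableOn (fun x => ‖u x‖^2 + ‖fderiv ℝ u x‖^2) (Omega n ε h1 h2 1) ∧
  ∀ ζ : Efull n → EuclideanSpace ℝ (Fin N), ContDiff ℝ (⊤ : ℕ∞) ζ →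
    HasCompactSupport ζ → tsupport ζ ⊆ Omega n ε h1 h2 1 →
    (∫ x in Omega n ε h1 h2 1,
      ((∑ α : Fin n, ∑ i : Fin N,
          ((∑ β : Fin n, ∑ j : Fin N, A α β i j x * fderiv ℝ u x (dir n β) j) +
            ∑ j : Fin N, B α i j x * u x j) * fderiv ℝ ζ x (dir n α) i) -
        ∑ i : Fin N,
          ((∑ β : Fin n, ∑ j : Fin N, Cc β i j x * fderiv ℝ u x (dir n β) j) +
            ∑ j : Fin N, Dc i j x * u x j) * ζ x i)) = 0

/-- `u` attains the boundary values `(φ, ψ)` on `Γ₁⁺` and `Γ₁⁻`. -/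
def AttainsBV {F : Type*} [NormedAddCommGroup F] [NormedSpace ℝ F] (n : ℕ) (ε : ℝ)
    (h1 h2 : Ep n → ℝ) (u : Efull n → F) (φ ψ : Ep n → F) : Prop :=
  ContinuousOn u (Omega n ε h1 h2 1 ∪ Gammap n ε h1 1 ∪ Gammam n ε h2 1) ∧
  (∀ y : Ep n, ‖y‖ ≤ 1 → u (y, ε/2 + h1 y) = φ y ∧ u (y, -ε/2 + h2 y) = ψ y)

/-- `u` is a harmonic function on `Ω₁` with boundary values `φ` on `Γ₁⁺` and `ψ` on `Γ₁⁻`. -/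
def HarmBV (n : ℕ) (ε : ℝ) (h1 h2 : Ep n → ℝ) (u : Efull n → ℝ) (φ ψ : Ep n → ℝ) : Prop :=
  ContDiffOn ℝ 2 u (Omega n ε h1 h2 1) ∧
  (∀ x ∈ Omega n ε h1 h2 1, lapl n u x = 0) ∧
  IntegrableOn (fun x => ‖u x‖^2 + ‖fderiv ℝ u x‖^2) (Omega n ε h1 h2 1) ∧
  AttainsBV n ε h1 h2 u φ ψ

/-!
In `Ω₁` one has `0 < ū < 1`, and `ũ = ūφ + (1 - ū)ψ` gives, for a horizontal direction `i`,
`∂ᵢ²ũ = ū ∂ᵢ²φ + (1 - ū) ∂ᵢ²ψ + 2 ∂ᵢū ∂ᵢ(φ - ψ) + (φ - ψ) ∂ᵢ²ū`,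
while `∂ₙ²ũ = 0` because `ũ` is affine in `xₙ`. So only `∂ᵢū` and `∂ᵢ²ū` have to be estimated.
Differentiating `ūδ = xₙ - h₂ + ε/2` twice yields
`δ ∂ᵢū = -(ū ∂ᵢh₁ + (1 - ū) ∂ᵢh₂)` and
`δ ∂ᵢ²ū = -(ū ∂ᵢ²h₁ + (1 - ū) ∂ᵢ²h₂ + 2 ∂ᵢū ∂ᵢ(h₁ - h₂))`.
Since `∇hⱼ(0') = 0`, the `C²` bound gives `|∇hⱼ(x')| ≤ κ₁|x'|`. With `δ ≥ (ε + |x'|²)/C₀` this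
bounds `∂ᵢū` by a multiple of `|x'|/(ε + |x'|²)`, and then `∂ᵢ²ū` by a multiple of
`1/(ε + |x'|²)`, the product of the two factors `|x'|` being absorbed by `ε + |x'|²`.
-/

open scoped Topology

section SecondDerivatives

variable {E F : Type*} [NormedAddCommGroup E] [NormedSpace ℝ E]
  [NormedAddCommGroup F] [NormedSpace ℝ F] {f : E → F} {s : Set E} {y : E}

lemma contDiffAt_of_contDiffOn_closedBall {c : E} {r : ℝ} {k : WithTop ℕ∞}
    (hf : ContDiffOn ℝ k f (closedBall c r)) (hy : y ∈ ball c r) : ContDiffAt ℝ k f y :=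
  hf.contDiffAt (closedBall_mem_nhds_of_mem hy)

lemma differentiableAt_fderiv_of_contDiffAt (hf : ContDiffAt ℝ 2 f y) :
    DifferentiableAt ℝ (fderiv ℝ f) y :=
  (hf.fderiv_right (m := 1) (by norm_num)).differentiableAt one_ne_zero

lemma norm_fderiv_le_norm_fderivWithin (hs : UniqueDiffWithinAt ℝ s y) :
    ‖fderiv ℝ f y‖ ≤ ‖fderivWithin ℝ f s y‖ := by
  by_cases hf : DifferentiableAt ℝ f y
  · rw [hf.fderivWithin hs]
  · rw [fderiv_zero_of_not_differentiableAt hf, norm_zero]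
    exact norm_nonneg _

lemma fderiv_eq_fderivWithin_of_continuousAt (hy : y ∈ closure (interior s))
    (hf : ContinuousAt (fderiv ℝ f) y) (hfs : ContinuousWithinAt (fderivWithin ℝ f s) s y) :
    fderiv ℝ f y = fderivWithin ℝ f s y := by
  have : (𝓝[interior s] y).NeBot := mem_closure_iff_nhdsWithin_neBot.1 hy
  refine tendsto_nhds_unique_of_eventuallyEq (hf.tendsto.mono_left nhdsWithin_le_nhds)
    (hfs.mono interior_subset).tendsto ?_
  filter_upwards [self_mem_nhdsWithin] with z hz
  exact (fderivWithin_of_mem_nhds (mem_interior_iff_mem_nhds.1 hz)).symm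

-- At a boundary point the ambient second derivative is either the junk value `0` or the second
-- derivative within `s`, so it cannot spoil the finiteness of suprema over closed balls.
lemma norm_fderiv_fderiv_le_norm_fderivWithin (hs : UniqueDiffWithinAt ℝ (interior s) y)
    (hfs : DifferentiableWithinAt ℝ (fderivWithin ℝ f s) s y) :
    ‖fderiv ℝ (fderiv ℝ f) y‖ ≤ ‖fderivWithin ℝ (fderivWithin ℝ f s) s y‖ := by
  by_cases hf : DifferentiableAt ℝ (fderiv ℝ f) y
  · have heq : Set.EqOn (fderiv ℝ f) (fderivWithin ℝ f s) (interior s) := fun z hz =>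
      (fderivWithin_of_mem_nhds (mem_interior_iff_mem_nhds.1 hz)).symm
    have heqy : fderiv ℝ f y = fderivWithin ℝ f s y :=
      fderiv_eq_fderivWithin_of_continuousAt hs.mem_closure hf.continuousAt
        hfs.continuousWithinAt
    rw [← hf.fderivWithin hs, fderivWithin_congr heq heqy,
      fderivWithin_subset interior_subset hs hfs]
  · rw [fderiv_zero_of_not_differentiableAt hf, ContinuousLinearMap.opNorm_zero]
    positivity

lemma bddAbove_norm_fderiv (hs : IsCompact s) (hsu : UniqueDiffOn ℝ s)
    (hf : ContDiffOn ℝ 1 f s) : BddAbove ((fun y => ‖fderiv ℝ f y‖) '' s) := by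
  obtain ⟨M, hM⟩ := hs.exists_bound_of_continuousOn (hf.continuousOn_fderivWithin hsu le_rfl)
  refine ⟨M, Set.forall_mem_image.2 fun y hy => ?_⟩
  exact (norm_fderiv_le_norm_fderivWithin (hsu y hy)).trans (hM y hy)

lemma bddAbove_norm_fderiv_fderiv (hs : IsCompact s)
    (hsu : ∀ y ∈ s, UniqueDiffWithinAt ℝ (interior s) y) (hf : ContDiffOn ℝ 2 f s) :
    BddAbove ((fun y => ‖fderiv ℝ (fderiv ℝ f) y‖) '' s) := by
  have hsu' : UniqueDiffOn ℝ s := fun y hy => (hsu y hy).mono interior_subset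
  have hf' : ContDiffOn ℝ 1 (fderivWithin ℝ f s) s := hf.fderivWithin hsu' (by norm_num)
  obtain ⟨M, hM⟩ := hs.exists_bound_of_continuousOn (hf'.continuousOn_fderivWithin hsu' le_rfl)
  refine ⟨M, Set.forall_mem_image.2 fun y hy => ?_⟩
  exact (norm_fderiv_fderiv_le_norm_fderivWithin (hsu y hy)
    (hf'.differentiableOn one_ne_zero y hy)).trans (hM y hy)

lemma uniqueDiffWithinAt_interior_closedBall {c : E} {r : ℝ} (hr : 0 < r)
    (hy : y ∈ closedBall c r) : UniqueDiffWithinAt ℝ (interior (closedBall c r)) y := by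
  rw [interior_closedBall c hr.ne']
  rw [← closure_ball c hr.ne'] at hy
  refine uniqueDiffWithinAt_convex (convex_ball c r) ?_ hy
  rw [isOpen_ball.interior_eq]
  exact nonempty_ball.2 hr

end SecondDerivatives

section Norms

variable {n : ℕ} {F : Type*} [NormedAddCommGroup F] [NormedSpace ℝ F] {f : Ep n → F} {y : Ep n}

lemma C2norm_nonneg (f : Ep n → F) : 0 ≤ C2norm n f :=
  Real.iSup_nonneg fun _ => by positivity

lemma gradSup_nonneg (f : Ep n → F) : 0 ≤ gradSup n f :=
  Real.iSup_nonneg fun _ => norm_nonneg _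

lemma hessSup_nonneg (f : Ep n → F) : 0 ≤ hessSup n f :=
  Real.iSup_nonneg fun _ => by positivity

lemma norm_fderiv_le_gradSup (hf : ContDiffOn ℝ 1 f (closedBall 0 1)) (hy : ‖y‖ ≤ 1) :
    ‖fderiv ℝ f y‖ ≤ gradSup n f :=
  le_ciSup_set (bddAbove_norm_fderiv (isCompact_closedBall 0 1)
    (fun _ hz => (uniqueDiffWithinAt_interior_closedBall one_pos hz).mono interior_subset) hf)
    (mem_closedBall_zero_iff.2 hy)

lemma norm_fderiv_fderiv_le_hessSup (hf : ContDiffOn ℝ 2 f (closedBall 0 1)) (hy : ‖y‖ ≤ 1) :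
    ‖fderiv ℝ (fderiv ℝ f) y‖ ≤ hessSup n f :=
  le_ciSup_set (bddAbove_norm_fderiv_fderiv (isCompact_closedBall 0 1)
    (fun _ hz => uniqueDiffWithinAt_interior_closedBall one_pos hz) hf)
    (mem_closedBall_zero_iff.2 hy)

lemma norm_fderiv_fderiv_le_C2norm (hf : ContDiffOn ℝ 2 f (closedBall 0 1)) (hy : ‖y‖ ≤ 1) :
    ‖fderiv ℝ (fderiv ℝ f) y‖ ≤ C2norm n f := by
  obtain ⟨M, hM⟩ := (isCompact_closedBall (0 : Ep n) 1).exists_bound_of_continuousOn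
    hf.continuousOn
  have hbdd : BddAbove ((fun z => ‖f z‖ + ‖fderiv ℝ f z‖ + ‖fderiv ℝ (fderiv ℝ f) z‖) ''
      closedBall (0 : Ep n) 1) := by
    refine ⟨M + gradSup n f + hessSup n f, Set.forall_mem_image.2 fun z hz => ?_⟩
    have hz1 : ‖z‖ ≤ 1 := mem_closedBall_zero_iff.1 hz
    exact add_le_add_three (hM z hz) (norm_fderiv_le_gradSup (hf.of_le one_le_two) hz1)
      (norm_fderiv_fderiv_le_hessSup hf hz1)
  calc ‖fderiv ℝ (fderiv ℝ f) y‖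
      ≤ ‖f y‖ + ‖fderiv ℝ f y‖ + ‖fderiv ℝ (fderiv ℝ f) y‖ :=
        le_add_of_nonneg_left (by positivity)
    _ ≤ C2norm n f := le_ciSup_set hbdd (mem_closedBall_zero_iff.2 hy)

lemma norm_fderiv_le_C2norm_mul_norm (hf : ContDiffOn ℝ 2 f (closedBall 0 1))
    (hf0 : fderiv ℝ f 0 = 0) (hy : ‖y‖ < 1) : ‖fderiv ℝ f y‖ ≤ C2norm n f * ‖y‖ := by
  have hdiff : ∀ z ∈ ball (0 : Ep n) 1, DifferentiableAt ℝ (fderiv ℝ f) z := fun z hz =>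
    differentiableAt_fderiv_of_contDiffAt (contDiffAt_of_contDiffOn_closedBall hf hz)
  have hbound : ∀ z ∈ ball (0 : Ep n) 1, ‖fderiv ℝ (fderiv ℝ f) z‖ ≤ C2norm n f := fun z hz =>
    norm_fderiv_fderiv_le_C2norm hf (mem_ball_zero_iff.1 hz).le
  simpa only [hf0, sub_zero] using (convex_ball (0 : Ep n) 1).norm_image_sub_le_of_norm_fderiv_le
    hdiff hbound (mem_ball_self one_pos) (mem_ball_zero_iff.2 hy)

end Norms

section DirectionalJets

variable {E : Type*} [NormedAddCommGroup E] [NormedSpace ℝ E]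

/-- The 2-jet of `f` at `x` along the direction `v`: `f` is `C²` at `x`, with `∂_v f(x) = a` and
`∂_v∂_v f(x) = b`. The second derivative is written in the form in which it occurs in `lapl`. -/
structure HasDirJet (f : E → ℝ) (x v : E) (a b : ℝ) : Prop where
  contDiffAt : ContDiffAt ℝ 2 f x
  fderiv_apply : fderiv ℝ f x v = a
  fderiv_fderiv_apply : fderiv ℝ (fun y => fderiv ℝ f y v) x v = b

variable {f g : E → ℝ} {x v : E} {a₁ a₂ b₁ b₂ : ℝ}

lemma hasDirJet_of_contDiffAt (hf : ContDiffAt ℝ 2 f x) (v : E) :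
    HasDirJet f x v (fderiv ℝ f x v) (fderiv ℝ (fderiv ℝ f) x v v) where
  contDiffAt := hf
  fderiv_apply := rfl
  fderiv_fderiv_apply := by
    rw [fderiv_clm_apply (differentiableAt_fderiv_of_contDiffAt hf) (differentiableAt_const v)]
    simp

lemma hasDirJet_const (c : ℝ) (x v : E) : HasDirJet (fun _ => c) x v 0 0 :=
  ⟨contDiffAt_const, by simp, by simp⟩

lemma hasDirJet_snd (x v : E × ℝ) : HasDirJet Prod.snd x v v.2 0 :=
  ⟨contDiffAt_snd, by simp [fderiv_snd], by simp [fderiv_snd]⟩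

namespace HasDirJet

lemma differentiableAt (hf : HasDirJet f x v a₁ a₂) : DifferentiableAt ℝ f x :=
  hf.contDiffAt.differentiableAt two_ne_zero

lemma eventually_differentiableAt (hf : HasDirJet f x v a₁ a₂) :
    ∀ᶠ y in 𝓝 x, DifferentiableAt ℝ f y :=
  (hf.contDiffAt.eventually (by simp)).mono fun _ hy => hy.differentiableAt two_ne_zero

lemma differentiableAt_fderiv_apply (hf : HasDirJet f x v a₁ a₂) :
    DifferentiableAt ℝ (fun y => fderiv ℝ f y v) x :=
  (differentiableAt_fderiv_of_contDiffAt hf.contDiffAt).clm_apply (differentiableAt_const v)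

lemma congr_of_eventuallyEq (hf : HasDirJet f x v a₁ a₂) (h : g =ᶠ[𝓝 x] f) :
    HasDirJet g x v a₁ a₂ where
  contDiffAt := hf.contDiffAt.congr_of_eventuallyEq h
  fderiv_apply := by rw [h.fderiv_eq, hf.fderiv_apply]
  fderiv_fderiv_apply := by
    have hfirst : (fun y => fderiv ℝ g y v) =ᶠ[𝓝 x] fun y => fderiv ℝ f y v :=
      h.fderiv.fun_comp fun L : E →L[ℝ] ℝ => L v
    rw [hfirst.fderiv_eq, hf.fderiv_fderiv_apply]

lemma unique (hf : HasDirJet f x v a₁ a₂) (hf' : HasDirJet f x v b₁ b₂) :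
    a₁ = b₁ ∧ a₂ = b₂ :=
  ⟨hf.fderiv_apply.symm.trans hf'.fderiv_apply,
    hf.fderiv_fderiv_apply.symm.trans hf'.fderiv_fderiv_apply⟩

lemma add (hf : HasDirJet f x v a₁ a₂) (hg : HasDirJet g x v b₁ b₂) :
    HasDirJet (fun y => f y + g y) x v (a₁ + b₁) (a₂ + b₂) where
  contDiffAt := hf.contDiffAt.add hg.contDiffAt
  fderiv_apply := by
    rw [fderiv_fun_add hf.differentiableAt hg.differentiableAt, add_apply, hf.fderiv_apply,
      hg.fderiv_apply]
  fderiv_fderiv_apply := by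
    have hfirst : (fun y => fderiv ℝ (fun z => f z + g z) y v) =ᶠ[𝓝 x]
        fun y => fderiv ℝ f y v + fderiv ℝ g y v := by
      filter_upwards [hf.eventually_differentiableAt, hg.eventually_differentiableAt] with y hfy hgy
      rw [fderiv_fun_add hfy hgy, add_apply]
    rw [hfirst.fderiv_eq, fderiv_fun_add hf.differentiableAt_fderiv_apply
      hg.differentiableAt_fderiv_apply, add_apply, hf.fderiv_fderiv_apply, hg.fderiv_fderiv_apply]

lemma mul (hf : HasDirJet f x v a₁ a₂) (hg : HasDirJet g x v b₁ b₂) :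
    HasDirJet (fun y => f y * g y) x v (a₁ * g x + f x * b₁)
      (a₂ * g x + 2 * a₁ * b₁ + f x * b₂) where
  contDiffAt := hf.contDiffAt.mul hg.contDiffAt
  fderiv_apply := by
    rw [fderiv_fun_mul hf.differentiableAt hg.differentiableAt]
    simp only [add_apply, smul_apply, smul_eq_mul, hf.fderiv_apply, hg.fderiv_apply]
    ring
  fderiv_fderiv_apply := by
    have hfirst : (fun y => fderiv ℝ (fun z => f z * g z) y v) =ᶠ[𝓝 x]
        fun y => f y * fderiv ℝ g y v + g y * fderiv ℝ f y v := by
      filter_upwards [hf.eventually_differentiableAt, hg.eventually_differentiableAt] with y hfy hgy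
      rw [fderiv_fun_mul hfy hgy]
      rfl
    have hf' := hf.differentiableAt_fderiv_apply
    have hg' := hg.differentiableAt_fderiv_apply
    rw [hfirst.fderiv_eq, fderiv_fun_add (hf.differentiableAt.fun_mul hg')
      (hg.differentiableAt.fun_mul hf'), fderiv_fun_mul hf.differentiableAt hg',
      fderiv_fun_mul hg.differentiableAt hf']
    simp only [add_apply, smul_apply, smul_eq_mul, hf.fderiv_apply, hg.fderiv_apply,
      hf.fderiv_fderiv_apply, hg.fderiv_fderiv_apply]
    ring

lemma sub (hf : HasDirJet f x v a₁ a₂) (hg : HasDirJet g x v b₁ b₂) :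
    HasDirJet (fun y => f y - g y) x v (a₁ - b₁) (a₂ - b₂) := by
  convert hf.add ((hasDirJet_const (-1) x v).mul hg) using 1
  · funext y
    ring
  · ring
  · ring

lemma div (hf : HasDirJet f x v a₁ a₂) (hg : HasDirJet g x v b₁ b₂) (hgx : g x ≠ 0) {q₁ : ℝ}
    (hq₁ : q₁ = (a₁ - f x / g x * b₁) / g x) :
    HasDirJet (fun y => f y / g y) x v q₁ ((a₂ - 2 * q₁ * b₁ - f x / g x * b₂) / g x) := by
  have hC : ContDiffAt ℝ 2 (fun y => f y / g y) x := hf.contDiffAt.div hg.contDiffAt hgx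
  have hq := hasDirJet_of_contDiffAt hC v
  have hcancel : f =ᶠ[𝓝 x] fun y => f y / g y * g y := by
    filter_upwards [hg.contDiffAt.continuousAt.eventually_ne hgx] with y hy
    exact (div_mul_cancel₀ _ hy).symm
  obtain ⟨hfirst, hsecond⟩ := hf.unique ((hq.mul hg).congr_of_eventuallyEq hcancel)
  have hq₁' : fderiv ℝ (fun y => f y / g y) x v = q₁ := by
    rw [hq₁, eq_div_iff hgx]
    linear_combination -hfirst
  rw [hq₁'] at hq hsecond
  convert hq using 1
  rw [div_eq_iff hgx]
  linear_combination hsecond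

lemma comp_fst {G : Type*} [NormedAddCommGroup G] [NormedSpace ℝ G] {x v : E × G}
    (hf : HasDirJet f x.1 v.1 a₁ a₂) : HasDirJet (fun y : E × G => f y.1) x v a₁ a₂ := by
  have hfderiv : ∀ {g : E → ℝ} {y : E × G}, DifferentiableAt ℝ g y.1 →
      fderiv ℝ (fun z : E × G => g z.1) y v = fderiv ℝ g y.1 v.1 := fun {g y} hg => by
    have h := hg.hasFDerivAt.comp y (hasFDerivAt_fst (𝕜 := ℝ) (p := y))
    exact congrArg (· v) h.fderiv
  refine ⟨hf.contDiffAt.comp x contDiffAt_fst, ?_, ?_⟩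
  · rw [hfderiv hf.differentiableAt, hf.fderiv_apply]
  · have hfirst : (fun y : E × G => fderiv ℝ (fun z : E × G => f z.1) y v) =ᶠ[𝓝 x]
        fun y => fderiv ℝ f y.1 v.1 :=
      (continuous_fst.continuousAt.eventually hf.eventually_differentiableAt).mono
        fun _ hy => hfderiv hy
    rw [hfirst.fderiv_eq, hfderiv hf.differentiableAt_fderiv_apply, hf.fderiv_fderiv_apply]

end HasDirJet

lemma hasDirJet_zero_direction (hf : ContDiffAt ℝ 2 f x) : HasDirJet f x 0 0 0 := by
  simpa only [map_zero] using hasDirJet_of_contDiffAt hf 0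

/-- `f` is `C²` at `x`, with `|∇f(x)| ≤ G` and `|∇²f(x)| ≤ H`: the only information on the
boundary graphs and on the boundary data that enters the estimate at a given point. -/
structure HasDerivBounds (f : E → ℝ) (x : E) (G H : ℝ) : Prop where
  contDiffAt : ContDiffAt ℝ 2 f x
  norm_fderiv_le : ‖fderiv ℝ f x‖ ≤ G
  norm_fderiv_fderiv_le : ‖fderiv ℝ (fderiv ℝ f) x‖ ≤ H

lemma HasDerivBounds.exists_hasDirJet {G H : ℝ} (hf : HasDerivBounds f x G H) (hv : ‖v‖ ≤ 1) :
    ∃ a b, HasDirJet f x v a b ∧ |a| ≤ G ∧ |b| ≤ H := by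
  refine ⟨_, _, hasDirJet_of_contDiffAt hf.contDiffAt v, ?_, ?_⟩
  · exact ((fderiv ℝ f x).unit_le_opNorm v hv).trans hf.norm_fderiv_le
  · calc |fderiv ℝ (fderiv ℝ f) x v v|
        ≤ ‖fderiv ℝ (fderiv ℝ f) x v‖ := (fderiv ℝ (fderiv ℝ f) x v).unit_le_opNorm v hv
      _ ≤ ‖fderiv ℝ (fderiv ℝ f) x‖ := (fderiv ℝ (fderiv ℝ f) x).unit_le_opNorm v hv
      _ ≤ H := hf.norm_fderiv_fderiv_le

end DirectionalJets

section ElementaryInequalities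

lemma abs_convexCombination_le {t a b A B : ℝ} (ht : t ∈ Set.Icc (0 : ℝ) 1) (ha : |a| ≤ A)
    (hb : |b| ≤ B) : |t * a + (1 - t) * b| ≤ t * A + (1 - t) * B := by
  have ht' : 0 ≤ 1 - t := sub_nonneg.2 ht.2
  calc |t * a + (1 - t) * b| ≤ |t * a| + |(1 - t) * b| := abs_add_le _ _
    _ = t * |a| + (1 - t) * |b| := by rw [abs_mul, abs_mul, abs_of_nonneg ht.1, abs_of_nonneg ht']
    _ ≤ t * A + (1 - t) * B := by gcongr; exact ht.1

lemma abs_div_le_of_div_le {a M P C δ : ℝ} (hP : 0 < P) (hC : 0 < C) (hδ : P / C ≤ δ)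
    (ha : |a| ≤ M) : |a / δ| ≤ C * M / P := by
  have hPC : 0 < P / C := div_pos hP hC
  have hM : 0 ≤ M := (abs_nonneg a).trans ha
  calc |a / δ| = |a| / δ := by rw [abs_div, abs_of_pos (hPC.trans_le hδ)]
    _ ≤ M / (P / C) := by gcongr
    _ = C * M / P := by field_simp

lemma abs_two_mul_mul_sub_le {κ K s P c a b : ℝ} (hκ : 0 ≤ κ) (hK : 0 ≤ K) (hs : 0 ≤ s)
    (hP : 0 < P) (hsP : s ^ 2 ≤ P) (hc : |c| ≤ K * (s / P)) (ha : |a| ≤ κ * s)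
    (hb : |b| ≤ κ * s) : |2 * c * (a - b)| ≤ 4 * κ * K :=
  calc |2 * c * (a - b)| = 2 * |c| * |a - b| := by rw [abs_mul, abs_mul, abs_two]
    _ ≤ 2 * (K * (s / P)) * (κ * s + κ * s) := by
      gcongr
      exact (abs_sub _ _).trans (add_le_add ha hb)
    _ = 4 * κ * K * (s ^ 2 / P) := by ring
    _ ≤ 4 * κ * K := mul_le_of_le_one_right (by positivity) ((div_le_one hP).2 hsP)

end ElementaryInequalities

section Interpolation

variable {n : ℕ} {ε r κ C₀ : ℝ} {h1 h2 φ ψ : Ep n → ℝ} {x : Efull n}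

lemma gap_pos_of_mem_Omega (hx : x ∈ Omega n ε h1 h2 r) : 0 < ε + h1 x.1 - h2 x.1 := by
  linarith [hx.2.1, hx.2.2]

lemma ubar_mem_Icc_of_mem_Omega (hx : x ∈ Omega n ε h1 h2 r) :
    ubar n ε h1 h2 x ∈ Set.Icc (0 : ℝ) 1 := by
  have hδ := gap_pos_of_mem_Omega hx
  exact ⟨div_nonneg (by linarith [hx.2.1]) hδ.le, (div_le_one hδ).2 (by linarith [hx.2.2])⟩

lemma hasDirJet_ubar {v : Efull n} {a₁ a₂ b₁ b₂ U₁ : ℝ} (ha : HasDirJet h1 x.1 v.1 a₁ a₂)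
    (hb : HasDirJet h2 x.1 v.1 b₁ b₂) (hδ : ε + h1 x.1 - h2 x.1 ≠ 0)
    (hU₁ : U₁ = (v.2 - (ubar n ε h1 h2 x * a₁ + (1 - ubar n ε h1 h2 x) * b₁)) /
      (ε + h1 x.1 - h2 x.1)) :
    HasDirJet (ubar n ε h1 h2) x v U₁
      (-(ubar n ε h1 h2 x * a₂ + (1 - ubar n ε h1 h2 x) * b₂ + 2 * U₁ * (a₁ - b₁)) /
        (ε + h1 x.1 - h2 x.1)) := by
  have hnum := ((hasDirJet_snd x v).sub hb.comp_fst).add (hasDirJet_const (ε / 2) x v)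
  have hden := ((hasDirJet_const ε x v).add ha.comp_fst).sub hb.comp_fst
  have hquot : HasDirJet (ubar n ε h1 h2) x v U₁ _ :=
    hnum.div hden hδ (by rw [hU₁]; simp only [ubar]; ring)
  convert hquot using 1
  simp only [ubar]
  ring

lemma hasDirJet_util {v : Efull n} {U₁ U₂ p₁ p₂ q₁ q₂ : ℝ}
    (hu : HasDirJet (ubar n ε h1 h2) x v U₁ U₂) (hp : HasDirJet φ x.1 v.1 p₁ p₂)
    (hq : HasDirJet ψ x.1 v.1 q₁ q₂) :
    HasDirJet (util n ε h1 h2 φ ψ) x v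
      (ubar n ε h1 h2 x * p₁ + (1 - ubar n ε h1 h2 x) * q₁ + (φ x.1 - ψ x.1) * U₁)
      (ubar n ε h1 h2 x * p₂ + (1 - ubar n ε h1 h2 x) * q₂ + 2 * U₁ * (p₁ - q₁) +
        (φ x.1 - ψ x.1) * U₂) := by
  have hsum : HasDirJet (util n ε h1 h2 φ ψ) x v _ _ :=
    (hp.comp_fst.mul hu).add (hq.comp_fst.mul ((hasDirJet_const 1 x v).sub hu))
  convert hsum using 1 <;> ring

lemma hasDirJet_util_vertical (h1C : ContDiffAt ℝ 2 h1 x.1) (h2C : ContDiffAt ℝ 2 h2 x.1)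
    (hφ : ContDiffAt ℝ 2 φ x.1) (hψ : ContDiffAt ℝ 2 ψ x.1) (hδ : ε + h1 x.1 - h2 x.1 ≠ 0) :
    HasDirJet (util n ε h1 h2 φ ψ) x (0, 1) ((φ x.1 - ψ x.1) / (ε + h1 x.1 - h2 x.1)) 0 := by
  have hu := hasDirJet_ubar (v := (0, 1)) (hasDirJet_zero_direction h1C)
    (hasDirJet_zero_direction h2C) hδ rfl
  convert hasDirJet_util hu (hasDirJet_zero_direction hφ) (hasDirJet_zero_direction hψ) using 1 <;>
    ring

lemma exists_hasDirJet_ubar_horizontal (hε : 0 < ε) (hC₀ : 0 < C₀)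
    (h1B : HasDerivBounds h1 x.1 (κ * ‖x.1‖) κ) (h2B : HasDerivBounds h2 x.1 (κ * ‖x.1‖) κ)
    (hδ : (ε + ‖x.1‖ ^ 2) / C₀ ≤ ε + h1 x.1 - h2 x.1) (hx : x ∈ Omega n ε h1 h2 r)
    {e : Ep n} (he : ‖e‖ ≤ 1) :
    ∃ U₁ U₂, HasDirJet (ubar n ε h1 h2) x (e, 0) U₁ U₂ ∧
      |U₁| ≤ κ * C₀ * (‖x.1‖ / (ε + ‖x.1‖ ^ 2)) ∧
      |U₂| ≤ (κ * C₀ + 4 * (κ * C₀) ^ 2) / (ε + ‖x.1‖ ^ 2) := by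
  obtain ⟨a₁, a₂, ha, ha₁, ha₂⟩ := h1B.exists_hasDirJet he
  obtain ⟨b₁, b₂, hb, hb₁, hb₂⟩ := h2B.exists_hasDirJet he
  have hκ : 0 ≤ κ := (abs_nonneg a₂).trans ha₂
  have hP : 0 < ε + ‖x.1‖ ^ 2 := by positivity
  have hu := ubar_mem_Icc_of_mem_Omega hx
  set u := ubar n ε h1 h2 x
  set P := ε + ‖x.1‖ ^ 2
  set U₁ := (0 - (u * a₁ + (1 - u) * b₁)) / (ε + h1 x.1 - h2 x.1) with hU₁def
  have hU₁ : |U₁| ≤ κ * C₀ * (‖x.1‖ / P) := by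
    have hnum : |0 - (u * a₁ + (1 - u) * b₁)| ≤ κ * ‖x.1‖ := by
      rw [zero_sub, abs_neg]
      linarith [abs_convexCombination_le hu ha₁ hb₁]
    exact (abs_div_le_of_div_le hP hC₀ hδ hnum).trans_eq (by ring)
  have hcross : |2 * U₁ * (a₁ - b₁)| ≤ 4 * κ * (κ * C₀) :=
    abs_two_mul_mul_sub_le hκ (by positivity) (norm_nonneg _) hP (by linarith) hU₁ ha₁ hb₁
  have hnum₂ : |-(u * a₂ + (1 - u) * b₂ + 2 * U₁ * (a₁ - b₁))| ≤ κ + 4 * κ * (κ * C₀) := by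
    rw [abs_neg]
    refine (abs_add_le _ _).trans (add_le_add ?_ hcross)
    linarith [abs_convexCombination_le hu ha₂ hb₂]
  exact ⟨U₁, _, hasDirJet_ubar ha hb (gap_pos_of_mem_Omega hx).ne' hU₁def, hU₁,
    (abs_div_le_of_div_le hP hC₀ hδ hnum₂).trans_eq (by ring)⟩

lemma abs_fderiv_fderiv_util_horizontal_le {Gφ Gψ Hφ Hψ : ℝ} (hε : 0 < ε) (hC₀ : 0 < C₀)
    (h1B : HasDerivBounds h1 x.1 (κ * ‖x.1‖) κ) (h2B : HasDerivBounds h2 x.1 (κ * ‖x.1‖) κ)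
    (hδ : (ε + ‖x.1‖ ^ 2) / C₀ ≤ ε + h1 x.1 - h2 x.1) (hx : x ∈ Omega n ε h1 h2 r)
    (hφ : HasDerivBounds φ x.1 Gφ Hφ) (hψ : HasDerivBounds ψ x.1 Gψ Hψ)
    {e : Ep n} (he : ‖e‖ ≤ 1) :
    |fderiv ℝ (fun y => fderiv ℝ (util n ε h1 h2 φ ψ) y (e, 0)) x (e, 0)| ≤
      |φ x.1 - ψ x.1| * ((κ * C₀ + 4 * (κ * C₀) ^ 2) / (ε + ‖x.1‖ ^ 2)) +
      2 * (κ * C₀ * (‖x.1‖ / (ε + ‖x.1‖ ^ 2))) * (Gφ + Gψ) + (Hφ + Hψ) := by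
  obtain ⟨U₁, U₂, hU, hU₁, hU₂⟩ := exists_hasDirJet_ubar_horizontal hε hC₀ h1B h2B hδ hx he
  obtain ⟨p₁, p₂, hp, hp₁, hp₂⟩ := hφ.exists_hasDirJet he
  obtain ⟨q₁, q₂, hq, hq₁, hq₂⟩ := hψ.exists_hasDirJet he
  have hu := ubar_mem_Icc_of_mem_Omega hx
  rw [(hasDirJet_util hU hp hq).fderiv_fderiv_apply]
  set u := ubar n ε h1 h2 x
  have hhess : |u * p₂ + (1 - u) * q₂| ≤ Hφ + Hψ := by
    refine (abs_convexCombination_le hu hp₂ hq₂).trans (add_le_add ?_ ?_)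
    · exact mul_le_of_le_one_left ((abs_nonneg p₂).trans hp₂) hu.2
    · exact mul_le_of_le_one_left ((abs_nonneg q₂).trans hq₂) (sub_le_self 1 hu.1)
  have hgrad : |2 * U₁ * (p₁ - q₁)| ≤
      2 * (κ * C₀ * (‖x.1‖ / (ε + ‖x.1‖ ^ 2))) * (Gφ + Gψ) := by
    rw [abs_mul, abs_mul, abs_two]
    have hU₁' := (abs_nonneg U₁).trans hU₁
    gcongr
    exact (abs_sub _ _).trans (add_le_add hp₁ hq₁)
  have hjump : |(φ x.1 - ψ x.1) * U₂| ≤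
      |φ x.1 - ψ x.1| * ((κ * C₀ + 4 * (κ * C₀) ^ 2) / (ε + ‖x.1‖ ^ 2)) := by
    rw [abs_mul]
    gcongr
  linarith [abs_add_three (u * p₂ + (1 - u) * q₂) (2 * U₁ * (p₁ - q₁)) ((φ x.1 - ψ x.1) * U₂)]

lemma abs_lapl_le_mul_of_forall_dir {u : Efull n → ℝ} {B : ℝ} (hB : 0 ≤ B)
    (hhor : ∀ e : Ep n, ‖e‖ ≤ 1 → |fderiv ℝ (fun y => fderiv ℝ u y (e, 0)) x (e, 0)| ≤ B)
    (hvert : fderiv ℝ (fun y => fderiv ℝ u y (0, 1)) x (0, 1) = 0) :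
    |lapl n u x| ≤ n * B := by
  have hdir : ∀ α : Fin n, |fderiv ℝ (fun y => fderiv ℝ u y (dir n α)) x (dir n α)| ≤ B := by
    intro α
    unfold dir
    split_ifs
    · exact hhor _ (by simp)
    · rwa [hvert, abs_zero]
  calc |lapl n u x|
      ≤ ∑ α : Fin n, |fderiv ℝ (fun y => fderiv ℝ u y (dir n α)) x (dir n α)| :=
        abs_sum_le_sum_abs _ _
    _ ≤ ∑ _α : Fin n, B := sum_le_sum fun α _ => hdir α
    _ = n * B := by simp

lemma abs_lapl_util_le {Gφ Gψ Hφ Hψ : ℝ} (hε : 0 < ε) (hC₀ : 0 < C₀)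
    (h1B : HasDerivBounds h1 x.1 (κ * ‖x.1‖) κ) (h2B : HasDerivBounds h2 x.1 (κ * ‖x.1‖) κ)
    (hδ : (ε + ‖x.1‖ ^ 2) / C₀ ≤ ε + h1 x.1 - h2 x.1) (hx : x ∈ Omega n ε h1 h2 r)
    (hφ : HasDerivBounds φ x.1 Gφ Hφ) (hψ : HasDerivBounds ψ x.1 Gψ Hψ) :
    |lapl n (util n ε h1 h2 φ ψ) x| ≤
      n * (|φ x.1 - ψ x.1| * ((κ * C₀ + 4 * (κ * C₀) ^ 2) / (ε + ‖x.1‖ ^ 2)) +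
        2 * (κ * C₀ * (‖x.1‖ / (ε + ‖x.1‖ ^ 2))) * (Gφ + Gψ) + (Hφ + Hψ)) := by
  have hhor := fun (e : Ep n) (he : ‖e‖ ≤ 1) =>
    abs_fderiv_fderiv_util_horizontal_le hε hC₀ h1B h2B hδ hx hφ hψ he
  refine abs_lapl_le_mul_of_forall_dir ?_ hhor ?_
  · exact (abs_nonneg _).trans (hhor 0 (by simp))
  · exact (hasDirJet_util_vertical h1B.contDiffAt h2B.contDiffAt hφ.contDiffAt hψ.contDiffAt
      (gap_pos_of_mem_Omega hx).ne').fderiv_fderiv_apply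

end Interpolation

section UnitBall

variable {n : ℕ} {f : Ep n → ℝ} {y : Ep n}

lemma hasDerivBounds_gradSup_hessSup (hf : ContDiffOn ℝ 2 f (closedBall 0 1)) (hy : ‖y‖ < 1) :
    HasDerivBounds f y (gradSup n f) (hessSup n f) :=
  ⟨contDiffAt_of_contDiffOn_closedBall hf (mem_ball_zero_iff.2 hy),
    norm_fderiv_le_gradSup (hf.of_le one_le_two) hy.le, norm_fderiv_fderiv_le_hessSup hf hy.le⟩

lemma hasDerivBounds_of_C2norm_le {κ : ℝ} (hf : ContDiffOn ℝ 2 f (closedBall 0 1))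
    (hf0 : fderiv ℝ f 0 = 0) (hκ : C2norm n f ≤ κ) (hy : ‖y‖ < 1) :
    HasDerivBounds f y (κ * ‖y‖) κ :=
  ⟨contDiffAt_of_contDiffOn_closedBall hf (mem_ball_zero_iff.2 hy),
    (norm_fderiv_le_C2norm_mul_norm hf hf0 hy).trans (by gcongr),
    (norm_fderiv_fderiv_le_C2norm hf hy.le).trans hκ⟩

end UnitBall

theorem stmt10_general (n : ℕ) (hn : 0 < n) (κ C₀ : ℝ) (hκ : 0 ≤ κ) (hC₀ : 0 < C₀) :
    ∃ C : ℝ, 0 < C ∧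
      ∀ ε : ℝ, 0 < ε → ∀ h1 h2 : Ep n → ℝ,
        ContDiffOn ℝ 2 h1 (closedBall 0 1) → ContDiffOn ℝ 2 h2 (closedBall 0 1) →
        fderiv ℝ h1 0 = 0 → fderiv ℝ h2 0 = 0 → C2norm n h1 ≤ κ → C2norm n h2 ≤ κ →
        (∀ y : Ep n, ‖y‖ < 1 → (ε + ‖y‖ ^ 2) / C₀ ≤ ε + h1 y - h2 y) →
        ∀ φ ψ : Ep n → ℝ,
          ContDiffOn ℝ 2 φ (closedBall 0 1) → ContDiffOn ℝ 2 ψ (closedBall 0 1) →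
        ∀ x ∈ Omega n ε h1 h2 1,
          |lapl n (util n ε h1 h2 φ ψ) x| ≤
            C * |φ x.1 - ψ x.1| / (ε + ‖x.1‖ ^ 2) +
            C * (‖x.1‖ / (ε + ‖x.1‖ ^ 2) + 1) * (gradSup n φ + gradSup n ψ) +
            C * (hessSup n φ + hessSup n ψ) := by
  have hκC : 0 ≤ κ * C₀ := by positivity
  set K := (1 + 2 * (κ * C₀)) ^ 2 with hK
  have hKjump : κ * C₀ + 4 * (κ * C₀) ^ 2 ≤ K := by rw [hK]; linarith
  have hKgrad : 2 * (κ * C₀) ≤ K := by rw [hK]; nlinarith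
  have hKhess : 1 ≤ K := by rw [hK]; nlinarith
  refine ⟨n * K, by positivity, ?_⟩
  intro ε hε h1 h2 h1C h2C h1z h2z h1κ h2κ hδ φ ψ hφ hψ x hx
  have hG : 0 ≤ gradSup n φ + gradSup n ψ := add_nonneg (gradSup_nonneg φ) (gradSup_nonneg ψ)
  have hH : 0 ≤ hessSup n φ + hessSup n ψ := add_nonneg (hessSup_nonneg φ) (hessSup_nonneg ψ)
  calc |lapl n (util n ε h1 h2 φ ψ) x|
      ≤ n * (|φ x.1 - ψ x.1| * ((κ * C₀ + 4 * (κ * C₀) ^ 2) / (ε + ‖x.1‖ ^ 2)) +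
          2 * (κ * C₀ * (‖x.1‖ / (ε + ‖x.1‖ ^ 2))) * (gradSup n φ + gradSup n ψ) +
          (hessSup n φ + hessSup n ψ)) :=
        abs_lapl_util_le hε hC₀ (hasDerivBounds_of_C2norm_le h1C h1z h1κ hx.1)
          (hasDerivBounds_of_C2norm_le h2C h2z h2κ hx.1) (hδ x.1 hx.1) hx
          (hasDerivBounds_gradSup_hessSup hφ hx.1) (hasDerivBounds_gradSup_hessSup hψ hx.1)
    _ ≤ n * (|φ x.1 - ψ x.1| * (K / (ε + ‖x.1‖ ^ 2)) +
          K * (‖x.1‖ / (ε + ‖x.1‖ ^ 2) + 1) * (gradSup n φ + gradSup n ψ) +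
          K * (hessSup n φ + hessSup n ψ)) := by
        rw [← mul_assoc 2]
        gcongr
        · exact le_add_of_nonneg_right zero_le_one
        · exact le_mul_of_one_le_left hH hKhess
    _ = _ := by ring

theorem stmt10 (n : ℕ) (hn : 2 ≤ n) (κ1 C₀ : ℝ) (hκ1 : 0 < κ1) (hC₀ : 1 ≤ C₀) :
    ∃ C : ℝ, 0 < C ∧
      ∀ κ0 : ℝ, 0 < κ0 → ∀ ε ∈ Set.Ioo (0:ℝ) 1, ∀ h1 h2 : Ep n → ℝ,
        HGeom n ε κ0 κ1 h1 h2 → DeltaComp n ε C₀ h1 h2 →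
        ∀ φ ψ : Ep n → ℝ,
          ContDiffOn ℝ 2 φ (closedBall 0 1) → ContDiffOn ℝ 2 ψ (closedBall 0 1) →
        ∀ x ∈ Omega n ε h1 h2 1,
          |lapl n (util n ε h1 h2 φ ψ) x| ≤
            C * |φ x.1 - ψ x.1| / (ε + ‖x.1‖^2) +
            C * (‖x.1‖ / (ε + ‖x.1‖^2) + 1) * (gradSup n φ + gradSup n ψ) +
            C * (hessSup n φ + hessSup n ψ) := by
  obtain ⟨C, hC, hbound⟩ := stmt10_general n (by lia) κ1 C₀ hκ1.le (by linarith)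
  refine ⟨C, hC, fun κ0 _ ε hε h1 h2 hgeom hgap => ?_⟩
  obtain ⟨h1C, h2C, -, -, -, h1z, h2z, -, hκ⟩ := hgeom
  exact hbound ε hε.1 h1 h2 h1C h2C h1z h2z (by linarith [C2norm_nonneg h2])
    (by linarith [C2norm_nonneg h1]) fun y hy => (hgap y hy.le).1
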